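/- arXiv:1606.04624 — 5 statements merged into one kernel-verified Lean document; each statement's English description precedes it below -/
import Mathlib

section
/- Let E be a type and let g be a real-valued function on multisets over E. For a multiset S and an element x of E, write rho_x(S) = g(S + {x}) - g(S), where S + {x} adds one copy of x to S. Then the following four conditions are equivalent: (1) for all multisets S, T with S <= T (multiset inclusion counting multiplicities) and all x in E, rho_x(S) >= rho_x(T); (2) for all multisets S and all x, y in E, rho_x(S) >= rho_x(S + {y}); (3) for all multisets S and T, g(T) <= g(S) + sum_{x in T - S} rho_x(S) - sum_{x in S - T} rho_x((S ∪ T) - {x}), where T - S denotes multiset difference, S ∪ T denotes the multiset union taking the maximum of the multiplicities, and the sums count elements with their multiplicity in the respective multiset difference; (4) for all multisets S, T with S <= T, g(T) <= g(S) + sum_{x in T - S} rho_x(S). -/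
theorem aux_up {E : Type*} (g : Multiset E → ℝ)
    (h : ∀ S T : Multiset E, S ≤ T → ∀ x : E, g (T + {x}) - g T ≤ g (S + {x}) - g S)
    (S D : Multiset E) :
    g (S + D) ≤ g S + (D.map (fun x => g (S + {x}) - g S)).sum := by
  induction D using Multiset.induction_on with
  | empty => simp
  | cons a D ih =>
    have h1 := h S (S + D) (Multiset.le_add_right S D) a
    have e : S + a ::ₘ D = S + D + {a} := by
      rw [← Multiset.singleton_add, add_comm {a} D, add_assoc]
    rw [Multiset.map_cons, Multiset.sum_cons, e]
    linarith

theorem aux_down {E : Type*} [DecidableEq E] (g : Multiset E → ℝ)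
    (h : ∀ S T : Multiset E, S ≤ T → ∀ x : E, g (T + {x}) - g T ≤ g (S + {x}) - g S)
    (T U D : Multiset E) (hU : T + D ≤ U) :
    (D.map (fun x => g (U.erase x + {x}) - g (U.erase x))).sum ≤ g (T + D) - g T := by
  induction D using Multiset.induction_on with
  | empty => simp
  | cons a D ih =>
    have e : T + a ::ₘ D = T + D + {a} := by
      rw [← Multiset.singleton_add, add_comm {a} D, add_assoc]
    rw [e] at hU
    have h0 : T + D ≤ U.erase a := by
      have := Multiset.erase_le_erase a hU
      rwa [add_comm (T + D), Multiset.singleton_add, Multiset.erase_cons_head] at this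
    have h1 := h _ _ h0 a
    have h2 := ih (h0.trans (Multiset.erase_le a U))
    rw [Multiset.map_cons, Multiset.sum_cons, e]
    linarith


/-- Equivalent characterizations of submodularity for a real-valued function `g` on
multisets over `E`, where `ρ_x(S) = g(S + {x}) - g(S)`:
(1) `ρ_x(S) ≥ ρ_x(T)` for all `S ≤ T` and all `x`;
(2) `ρ_x(S) ≥ ρ_x(S + {y})` for all `S, x, y`;
(3) `g(T) ≤ g(S) + ∑_{x ∈ T-S} ρ_x(S) - ∑_{x ∈ S-T} ρ_x((S ∪ T) - {x})` for all `S, T`;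
(4) `g(T) ≤ g(S) + ∑_{x ∈ T-S} ρ_x(S)` for all `S ≤ T`. -/
theorem submodular_multiset_tfae {E : Type*} [DecidableEq E] (g : Multiset E → ℝ) :
    List.TFAE
      [∀ S T : Multiset E, S ≤ T → ∀ x : E,
          g (T + {x}) - g T ≤ g (S + {x}) - g S,
        ∀ (S : Multiset E) (x y : E),
          g ((S + {y}) + {x}) - g (S + {y}) ≤ g (S + {x}) - g S,
        ∀ S T : Multiset E,
          g T ≤ g S + ((T - S).map (fun x => g (S + {x}) - g S)).sum
            - ((S - T).map (fun x =>
                g ((S ∪ T).erase x + {x}) - g ((S ∪ T).erase x))).sum,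
        ∀ S T : Multiset E, S ≤ T →
          g T ≤ g S + ((T - S).map (fun x => g (S + {x}) - g S)).sum] := by
  tfae_have 1 → 3 := by
    intro h S T
    have e1 : S ∪ T = S + (T - S) := by
      rw [Multiset.union_comm, Multiset.union_def, add_comm]
    have e2 : S ∪ T = T + (S - T) := by
      rw [Multiset.union_def, add_comm]
    have h1 := aux_up g h S (T - S)
    have h2 := aux_down g h T (S ∪ T) (S - T) e2.ge
    rw [← e1] at h1
    rw [← e2] at h2
    linarith
  tfae_have 3 → 4 := by
    intro h S T hST
    have := h S T
    rw [tsub_eq_zero_of_le hST] at this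
    simpa using this
  tfae_have 4 → 2 := by
    intro h S x y
    have h1 := h S (S + {y} + {x}) (by rw [add_assoc]; exact Multiset.le_add_right _ _)
    rw [add_assoc, add_tsub_cancel_left, ← add_assoc, Multiset.map_add, Multiset.sum_add] at h1
    simp only [Multiset.map_singleton, Multiset.sum_singleton] at h1
    linarith
  tfae_have 2 → 1 := by
    intro h S T hST x
    obtain ⟨D, rfl⟩ := Multiset.le_iff_exists_add.1 hST
    clear hST
    induction D using Multiset.induction_on with
    | empty => simp
    | cons a D ih =>
      have e : S + a ::ₘ D = S + D + {a} := by
        rw [← Multiset.singleton_add, add_comm {a} D, add_assoc]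
      rw [e]
      exact (h (S + D) x a).trans ih
  tfae_finish
end

section
/- Let n be a positive integer and let f : R^n -> R be twice continuously differentiable. Then f is submodular if and only if every entry of its Hessian is nonpositive everywhere, i.e., for all x in R^n and all indices i, j (including i = j), the second-order partial derivative d^2 f / dx_i dx_j (x) <= 0. -/
lemma aux_le {E : Type*} [NormedAddCommGroup E] [NormedSpace ℝ E] (g : E → ℝ)
    (hg : Differentiable ℝ g) (v : E) (h : ∀ z, fderiv ℝ g z v ≤ 0) (x : E) :
    g (x + v) ≤ g x := by
  have hd : ∀ t : ℝ, HasDerivAt (fun t : ℝ => g (x + t • v)) (fderiv ℝ g (x + t • v) v) t := by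
    intro t
    have h1 : HasDerivAt (fun t : ℝ => x + t • v) v t := by
      simpa using ((hasDerivAt_id t).smul_const v).const_add x
    exact (hg (x + t • v)).hasFDerivAt.comp_hasDerivAt t h1
  have ha : Antitone (fun t : ℝ => g (x + t • v)) :=
    antitone_of_deriv_nonpos (fun t => (hd t).differentiableAt)
      (fun t => by rw [(hd t).deriv]; exact h _)
  simpa using ha (zero_le_one (α := ℝ))

lemma aux_deriv {E : Type*} [NormedAddCommGroup E] [NormedSpace ℝ E] (g : E → ℝ)
    (hg : Differentiable ℝ g) (v : E) (h : ∀ z, ∀ t : ℝ, 0 ≤ t → g (z + t • v) ≤ g z) (x : E) :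
    fderiv ℝ g x v ≤ 0 := by
  have h1 : HasDerivAt (fun t : ℝ => x + t • v) v 0 := by
    simpa using ((hasDerivAt_id (0 : ℝ)).smul_const v).const_add x
  have hd : HasDerivAt (fun t : ℝ => g (x + t • v)) (fderiv ℝ g x v) 0 := by
    have h2 : HasFDerivAt g (fderiv ℝ g x) (x + (0 : ℝ) • v) := by
      simpa using (hg x).hasFDerivAt
    exact h2.comp_hasDerivAt 0 h1
  have ha : Antitone (fun t : ℝ => g (x + t • v)) := by
    intro s t hst
    have := h (x + s • v) (t - s) (sub_nonneg.2 hst)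
    rwa [add_assoc, ← add_smul, add_sub_cancel] at this
  rw [← hd.deriv]
  exact ha.deriv_nonpos

lemma aux_sub {E : Type*} [NormedAddCommGroup E] [NormedSpace ℝ E] (f : E → ℝ)
    (hf : Differentiable ℝ f) (d x v : E) :
    fderiv ℝ (fun z => f (z + d) - f z) x v = fderiv ℝ f (x + d) v - fderiv ℝ f x v := by
  have h1 : DifferentiableAt ℝ (fun z => f (z + d)) x := by fun_prop
  rw [fderiv_fun_sub h1 (hf x), fderiv_comp_add_right]
  rfl

/-- A `C²` function `f : ℝⁿ → ℝ` is submodular (i.e. `f(x+δ) - f(x) ≥ f(y+δ) - f(y)`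
whenever `x ≤ y` componentwise and `δ ≥ 0` componentwise) if and only if every entry
of its Hessian is nonpositive everywhere. -/
theorem c2_submodular_iff_hessian_nonpos (n : ℕ) (hn : 0 < n)
    (f : (Fin n → ℝ) → ℝ) (hf : ContDiff ℝ 2 f) :
    (∀ x y : Fin n → ℝ, x ≤ y → ∀ δ : Fin n → ℝ, 0 ≤ δ →
      f (y + δ) - f y ≤ f (x + δ) - f x) ↔
    (∀ x : Fin n → ℝ, ∀ i j : Fin n,
      fderiv ℝ (fun y => fderiv ℝ f y (Pi.single i 1)) x (Pi.single j 1) ≤ 0) := by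
  have hd : Differentiable ℝ f := hf.differentiable (by norm_num)
  have hF : Differentiable ℝ (fderiv ℝ f) :=
    (hf.fderiv_right (m := 1) (by norm_num)).differentiable (by norm_num)
  have hk : ∀ w, Differentiable ℝ (fun y => fderiv ℝ f y w) := fun w => by fun_prop
  have hkd : ∀ x w v, fderiv ℝ (fun y => fderiv ℝ f y w) x v
      = fderiv ℝ (fderiv ℝ f) x v w := by
    intro x w v
    rw [fderiv_clm_apply (hF x) (differentiableAt_const w)]
    simp
  have hg : ∀ d, Differentiable ℝ (fun z => f (z + d) - f z) := fun d => by fun_prop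
  have hnn : ∀ (t : ℝ) (i : Fin n), 0 ≤ t → 0 ≤ t • (Pi.single i 1 : Fin n → ℝ) := by
    intro t i ht
    exact smul_nonneg ht (Pi.single_nonneg.2 zero_le_one)
  constructor
  · intro h x i j
    refine aux_deriv _ (hk _) _ (fun z s hs => ?_) x
    have := aux_deriv _ (hg (s • Pi.single j 1)) (Pi.single i 1) (fun y t ht =>
      h y _ (le_add_of_nonneg_right (hnn t i ht)) _ (hnn s j hs)) z
    rw [aux_sub f hd] at this
    linarith
  · intro h x y hxy δ hδ
    have key : ∀ z, fderiv ℝ (fun y' => fderiv ℝ f y' (y - x)) z δ ≤ 0 := by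
      intro z
      rw [hkd, pi_eq_sum_univ' δ, pi_eq_sum_univ' (y - x)]
      simp only [map_sum, map_smul, ContinuousLinearMap.sum_apply,
        ContinuousLinearMap.smul_apply, smul_eq_mul]
      refine Finset.sum_nonpos fun i _ => ?_
      refine mul_nonpos_of_nonneg_of_nonpos (sub_nonneg.2 (hxy i)) ?_
      refine Finset.sum_nonpos fun j _ => ?_
      refine mul_nonpos_of_nonneg_of_nonpos (hδ j) ?_
      have := h z i j
      rw [hkd] at this
      convert this using 3 <;> (try ext k) <;> simp [Pi.single_apply, eq_comm]
    have := aux_le _ (hg δ) (y - x) (fun z => by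
      rw [aux_sub f hd]
      have := aux_le _ (hk (y - x)) δ key z
      linarith) x
    simpa using this
end

section
/- Fix sigma_1 > 0, sigma_2 > 0 and sigma_W > 0, and define sigmatilde_i^2(z) = sigma_i^2 * z / (sigma_W^2 / sigma_i^2 + z) for z >= 0 and i = 1, 2. Then the function v(z_1, z_2) = (1/sqrt(2*pi)) * sqrt(sigmatilde_1^2(z_1) + sigmatilde_2^2(z_2)) is submodular on [0, infinity)^2: for all z, z' in [0, infinity)^2 with z <= z' componentwise and all delta in [0, infinity)^2, v(z + delta) - v(z) >= v(z' + delta) - v(z'). -/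
/-- `σ̃ᵢ²(z) = σᵢ² z / (σ_W²/σᵢ² + z)`, the reduction in variance of the posterior
mean of alternative `i` after `z` measurements. -/
noncomputable def sigmatildeSq (σ σW z : ℝ) : ℝ := σ ^ 2 * z / (σW ^ 2 / σ ^ 2 + z)

/-- The value of information of the allocation `(z₁, z₂)` in the two-alternative
case with equal prior means: `v(z₁,z₂) = s(z₁,z₂)/√(2π)` where
`s(z₁,z₂) = √(σ̃₁²(z₁) + σ̃₂²(z₂))`. -/
noncomputable def voiEqualMeans (σ1 σ2 σW z1 z2 : ℝ) : ℝ :=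
  (1 / Real.sqrt (2 * Real.pi)) *
    Real.sqrt (sigmatildeSq σ1 σW z1 + sigmatildeSq σ2 σW z2)

theorem sigmatildeSq_incr (σ σW : ℝ) (h : 0 < σ) (hW : 0 < σW) (z δ : ℝ) (hz : 0 ≤ z)
    (hd : 0 ≤ δ) : sigmatildeSq σ σW (z + δ) - sigmatildeSq σ σW z =
      σW ^ 2 * δ / ((σW ^ 2 / σ ^ 2 + z) * (σW ^ 2 / σ ^ 2 + (z + δ))) := by
  have hk : 0 < σW ^ 2 / σ ^ 2 := by positivity
  have e : σW ^ 2 = σ ^ 2 * (σW ^ 2 / σ ^ 2) := by field_simp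
  unfold sigmatildeSq
  rw [show σW ^ 2 * δ = σ ^ 2 * (σW ^ 2 / σ ^ 2) * δ by rw [← e]]
  generalize σW ^ 2 / σ ^ 2 = k at *
  have a1 : k + z ≠ 0 := by positivity
  have a2 : k + (z + δ) ≠ 0 := by positivity
  rw [div_sub_div _ _ a2 a1, div_eq_div_iff (mul_ne_zero a2 a1) (mul_ne_zero a1 a2)]
  ring

theorem sigmatildeSq_nonneg (σ σW z : ℝ) (hz : 0 ≤ z) : 0 ≤ sigmatildeSq σ σW z := by
  unfold sigmatildeSq
  positivity

theorem sigmatildeSq_mono (σ σW : ℝ) (h : 0 < σ) (hW : 0 < σW) (z δ : ℝ) (hz : 0 ≤ z)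
    (hd : 0 ≤ δ) : sigmatildeSq σ σW z ≤ sigmatildeSq σ σW (z + δ) := by
  have := sigmatildeSq_incr σ σW h hW z δ hz hd
  have : 0 ≤ σW ^ 2 * δ / ((σW ^ 2 / σ ^ 2 + z) * (σW ^ 2 / σ ^ 2 + (z + δ))) := by positivity
  linarith

theorem sigmatildeSq_concave (σ σW : ℝ) (h : 0 < σ) (hW : 0 < σW) (z z' δ : ℝ) (hz : 0 ≤ z)
    (hzz : z ≤ z') (hd : 0 ≤ δ) :
    sigmatildeSq σ σW (z' + δ) - sigmatildeSq σ σW z' ≤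
      sigmatildeSq σ σW (z + δ) - sigmatildeSq σ σW z := by
  rw [sigmatildeSq_incr σ σW h hW z δ hz hd,
    sigmatildeSq_incr σ σW h hW z' δ (hz.trans hzz) hd]
  have hk : 0 < σW ^ 2 / σ ^ 2 := by positivity
  have hz0 : 0 ≤ z' := hz.trans hzz
  gcongr

theorem sqrt_incr {A B C D : ℝ} (hA : 0 ≤ A) (hAB : A ≤ B) (hAC : A ≤ C) (hCD : C ≤ D)
    (h : D - C ≤ B - A) : √D - √C ≤ √B - √A := by
  have a := Real.sq_sqrt hA
  have b := Real.sq_sqrt (hA.trans hAB)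
  have c := Real.sq_sqrt (hA.trans hAC)
  have d := Real.sq_sqrt ((hA.trans hAC).trans hCD)
  have ab := Real.sqrt_le_sqrt hAB
  have ac := Real.sqrt_le_sqrt hAC
  have a0 := Real.sqrt_nonneg A
  by_contra! hc
  nlinarith [mul_nonneg (sub_nonneg.2 ab) (sub_nonneg.2 ac)]

/-- The value of information `v(z₁,z₂) = s(z₁,z₂)/√(2π)` is submodular on
`[0,∞)²`: for `0 ≤ z ≤ z'` componentwise and `δ ≥ 0` componentwise,
`v(z+δ) - v(z) ≥ v(z'+δ) - v(z')`. -/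
theorem voi_equal_means_submodular (σ1 σ2 σW : ℝ)
    (h1 : 0 < σ1) (h2 : 0 < σ2) (hW : 0 < σW) :
    ∀ z1 z2 z1' z2' δ1 δ2 : ℝ,
      0 ≤ z1 → 0 ≤ z2 → z1 ≤ z1' → z2 ≤ z2' → 0 ≤ δ1 → 0 ≤ δ2 →
      voiEqualMeans σ1 σ2 σW (z1' + δ1) (z2' + δ2) - voiEqualMeans σ1 σ2 σW z1' z2' ≤
      voiEqualMeans σ1 σ2 σW (z1 + δ1) (z2 + δ2) - voiEqualMeans σ1 σ2 σW z1 z2 := by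
  intro z1 z2 z1' z2' δ1 δ2 hz1 hz2 hzz1 hzz2 hd1 hd2
  unfold voiEqualMeans
  rw [← mul_sub, ← mul_sub]
  refine mul_le_mul_of_nonneg_left ?_ (by positivity)
  have m1 := sigmatildeSq_mono σ1 σW h1 hW z1 δ1 hz1 hd1
  have m2 := sigmatildeSq_mono σ2 σW h2 hW z2 δ2 hz2 hd2
  have n1 := sigmatildeSq_mono σ1 σW h1 hW z1' δ1 (hz1.trans hzz1) hd1
  have n2 := sigmatildeSq_mono σ2 σW h2 hW z2' δ2 (hz2.trans hzz2) hd2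
  have p1 := sigmatildeSq_mono σ1 σW h1 hW z1 (z1' - z1) hz1 (sub_nonneg.2 hzz1)
  have p2 := sigmatildeSq_mono σ2 σW h2 hW z2 (z2' - z2) hz2 (sub_nonneg.2 hzz2)
  rw [add_sub_cancel] at p1 p2
  have c1 := sigmatildeSq_concave σ1 σW h1 hW z1 z1' δ1 hz1 hzz1 hd1
  have c2 := sigmatildeSq_concave σ2 σW h2 hW z2 z2' δ2 hz2 hzz2 hd2
  have q1 := sigmatildeSq_nonneg σ1 σW z1 hz1
  have q2 := sigmatildeSq_nonneg σ2 σW z2 hz2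
  apply sqrt_incr <;> linarith
end

section
/- Fix sigma_1 > 0, sigma_2 > 0, sigma_W > 0 and c >= 0. Define sigmatilde_i^2(z) = sigma_i^2 * z / (sigma_W^2 / sigma_i^2 + z), sigmatilde_i(z) = sqrt(sigmatilde_i^2(z)), s(z_1, z_2) = sqrt(sigmatilde_1^2(z_1) + sigmatilde_2^2(z_2)), and v(z_1, z_2) = s(z_1, z_2) * f(-c / s(z_1, z_2)), where f(a) = a*Phi(a) + phi(a) with Phi the standard normal cumulative distribution function and phi the standard normal density. Then for all z_1 > 0 and z_2 > 0, the mixed second partial derivative of v satisfies d^2 v / (dz_1 dz_2) = (sigmatilde_1(z_1) * sigmatilde_1'(z_1) * sigmatilde_2(z_2) * sigmatilde_2'(z_2) / s(z_1,z_2)^3) * phi(-c / s(z_1,z_2)) * (c^2 / (sigmatilde_1^2(z_1) + sigmatilde_2^2(z_2)) - 1), where sigmatilde_i' denotes the derivative of sigmatilde_i. -/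
/-- The standard normal density `φ(ζ) = exp(-ζ²/2)/√(2π)`. -/
noncomputable def stdGaussPDF (ζ : ℝ) : ℝ :=
  (1 / Real.sqrt (2 * Real.pi)) * Real.exp (-ζ ^ 2 / 2)

/-- The standard normal cumulative distribution function `Φ(ζ) = ∫_{-∞}^ζ φ`. -/
noncomputable def stdGaussCDF (ζ : ℝ) : ℝ := ∫ t in Set.Iic ζ, stdGaussPDF t

/-- `f(a) = a·Φ(a) + φ(a)`. -/
noncomputable def fKG (a : ℝ) : ℝ := a * stdGaussCDF a + stdGaussPDF a

/-- `σ̃ᵢ(z) = √(σ̃ᵢ²(z))`. -/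
noncomputable def sigmatilde (σ σW z : ℝ) : ℝ := Real.sqrt (sigmatildeSq σ σW z)

/-- `s(z₁,z₂) = √(σ̃₁²(z₁) + σ̃₂²(z₂))`. -/
noncomputable def sAlloc (σ1 σ2 σW z1 z2 : ℝ) : ℝ :=
  Real.sqrt (sigmatildeSq σ1 σW z1 + sigmatildeSq σ2 σW z2)

/-- The value of information `v(z₁,z₂) = s(z₁,z₂)·f(-c/s(z₁,z₂))` of the
allocation `(z₁,z₂)`, with `c = |θ₁⁰ - θ₂⁰|`. -/
noncomputable def voi (σ1 σ2 σW c z1 z2 : ℝ) : ℝ :=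
  sAlloc σ1 σ2 σW z1 z2 * fKG (-c / sAlloc σ1 σ2 σW z1 z2)

lemma pdf_hasDerivAt (x : ℝ) : HasDerivAt stdGaussPDF (-x * stdGaussPDF x) x := by
  have h : HasDerivAt (fun x : ℝ => -x ^ 2 / 2) (-x) x := by
    have := ((hasDerivAt_pow 2 x).neg).div_const 2
    refine this.congr_deriv ?_
    simp
    ring
  have h2 := (h.exp).const_mul (1 / Real.sqrt (2 * Real.pi))
  refine h2.congr_deriv ?_
  unfold stdGaussPDF
  ring

lemma pdf_continuous : Continuous stdGaussPDF := by
  unfold stdGaussPDF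
  fun_prop

lemma pdf_integrable : MeasureTheory.Integrable stdGaussPDF := by
  have h := (integrable_exp_neg_mul_sq (b := 1 / 2) (by norm_num)).const_mul
    (1 / Real.sqrt (2 * Real.pi))
  convert h using 1
  funext x
  unfold stdGaussPDF
  congr 2
  ring

lemma cdf_hasDerivAt (x : ℝ) : HasDerivAt stdGaussCDF (stdGaussPDF x) x := by
  have h : HasDerivAt (fun y => ∫ t in (0:ℝ)..y, stdGaussPDF t) (stdGaussPDF x) x :=
    intervalIntegral.integral_hasDerivAt_right (pdf_continuous.intervalIntegrable _ _)
      pdf_continuous.stronglyMeasurable.stronglyMeasurableAtFilter pdf_continuous.continuousAt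
  have h2 := h.add_const (stdGaussCDF 0)
  have e : stdGaussCDF = fun x => (∫ t in (0:ℝ)..x, stdGaussPDF t) + stdGaussCDF 0 := by
    funext y
    have := intervalIntegral.integral_Iic_sub_Iic (a := 0) (b := y) (μ := MeasureTheory.volume)
      pdf_integrable.integrableOn pdf_integrable.integrableOn
    unfold stdGaussCDF
    linarith
  rw [e]
  exact h2

lemma fKG_hasDerivAt (x : ℝ) : HasDerivAt fKG (stdGaussCDF x) x := by
  have h := ((hasDerivAt_id x).mul (cdf_hasDerivAt x)).add (pdf_hasDerivAt x)
  refine h.congr_deriv ?_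
  simp

lemma arg_hasDerivAt (c q : ℝ) (hq : 0 < q) :
    HasDerivAt (fun q => -c / Real.sqrt q) (c / (2 * Real.sqrt q ^ 3)) q := by
  have hs : 0 < Real.sqrt q := Real.sqrt_pos.2 hq
  have h := (hasDerivAt_const q (-c)).div (Real.hasDerivAt_sqrt hq.ne') hs.ne'
  refine h.congr_deriv ?_
  field_simp
  ring

lemma G_hasDerivAt (c q : ℝ) (hq : 0 < q) :
    HasDerivAt (fun q => Real.sqrt q * fKG (-c / Real.sqrt q))
      (stdGaussPDF (-c / Real.sqrt q) / (2 * Real.sqrt q)) q := by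
  have hs : 0 < Real.sqrt q := Real.sqrt_pos.2 hq
  have h := (Real.hasDerivAt_sqrt hq.ne').mul
    ((fKG_hasDerivAt (-c / Real.sqrt q)).comp q (arg_hasDerivAt c q hq))
  refine h.congr_deriv ?_
  simp only [fKG, Function.comp]
  field_simp
  ring

lemma G2_hasDerivAt (c q : ℝ) (hq : 0 < q) :
    HasDerivAt (fun q => stdGaussPDF (-c / Real.sqrt q) / (2 * Real.sqrt q))
      (stdGaussPDF (-c / Real.sqrt q) / (4 * Real.sqrt q ^ 3) * (c ^ 2 / q - 1)) q := by
  have hs : 0 < Real.sqrt q := Real.sqrt_pos.2 hq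
  have h := ((pdf_hasDerivAt (-c / Real.sqrt q)).comp q (arg_hasDerivAt c q hq)).div
    ((Real.hasDerivAt_sqrt hq.ne').const_mul 2) (by positivity)
  refine h.congr_deriv ?_
  simp only [Function.comp]
  have e : c ^ 2 / q = c ^ 2 / Real.sqrt q ^ 2 := by rw [Real.sq_sqrt hq.le]
  rw [e]
  field_simp
  ring

lemma sq_pos' (σ σW z : ℝ) (h : 0 < σ) (hz : 0 < z) : 0 < sigmatildeSq σ σW z := by
  unfold sigmatildeSq
  positivity

lemma sq_diff (σ σW z : ℝ) (hz : 0 < z) : DifferentiableAt ℝ (sigmatildeSq σ σW) z := by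
  unfold sigmatildeSq
  have : σW ^ 2 / σ ^ 2 + z ≠ 0 := by positivity
  fun_prop (disch := assumption)

lemma tilde_deriv (σ σW z : ℝ) (h : 0 < σ) (hz : 0 < z) :
    sigmatilde σ σW z * deriv (sigmatilde σ σW) z = deriv (sigmatildeSq σ σW) z / 2 := by
  have hp := sq_pos' σ σW z h hz
  have hs : 0 < Real.sqrt (sigmatildeSq σ σW z) := Real.sqrt_pos.2 hp
  have hd : HasDerivAt (sigmatilde σ σW) _ z := (sq_diff σ σW z hz).hasDerivAt.sqrt hp.ne'
  rw [hd.deriv]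
  unfold sigmatilde
  field_simp

/-- The mixed second partial derivative of the value of information:
`∂²v/∂z₁∂z₂ = (σ̃₁ σ̃₁' σ̃₂ σ̃₂' / s³) · φ(-c/s) · (c²/(σ̃₁² + σ̃₂²) - 1)`. -/
theorem voi_mixed_partial (σ1 σ2 σW c : ℝ)
    (h1 : 0 < σ1) (h2 : 0 < σ2) (hW : 0 < σW) (hc : 0 ≤ c) :
    ∀ z1 z2 : ℝ, 0 < z1 → 0 < z2 →
      deriv (fun b => deriv (fun a => voi σ1 σ2 σW c a b) z1) z2 =
        sigmatilde σ1 σW z1 * deriv (sigmatilde σ1 σW) z1 *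
          sigmatilde σ2 σW z2 * deriv (sigmatilde σ2 σW) z2 /
          (sAlloc σ1 σ2 σW z1 z2) ^ 3 *
          stdGaussPDF (-c / sAlloc σ1 σ2 σW z1 z2) *
          (c ^ 2 / (sigmatildeSq σ1 σW z1 + sigmatildeSq σ2 σW z2) - 1) := by
  intro z1 z2 hz1 hz2
  have hq : ∀ b, 0 < b → 0 < sigmatildeSq σ1 σW z1 + sigmatildeSq σ2 σW b := fun b hb =>
    add_pos (sq_pos' _ _ _ h1 hz1) (sq_pos' _ _ _ h2 hb)
  have e1 : (fun b => deriv (fun a => voi σ1 σ2 σW c a b) z1) =ᶠ[nhds z2]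
      fun b => stdGaussPDF (-c / Real.sqrt (sigmatildeSq σ1 σW z1 + sigmatildeSq σ2 σW b)) /
        (2 * Real.sqrt (sigmatildeSq σ1 σW z1 + sigmatildeSq σ2 σW b)) *
        deriv (sigmatildeSq σ1 σW) z1 := by
    filter_upwards [lt_mem_nhds hz2] with b hb
    exact ((G_hasDerivAt c _ (hq b hb)).comp z1
      ((sq_diff σ1 σW z1 hz1).hasDerivAt.add_const (sigmatildeSq σ2 σW b))).deriv
  rw [e1.deriv_eq]
  have e2 := (((G2_hasDerivAt c _ (hq z2 hz2)).comp z2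
      ((sq_diff σ2 σW z2 hz2).hasDerivAt.const_add (sigmatildeSq σ1 σW z1))).mul_const
        (deriv (sigmatildeSq σ1 σW) z1)).deriv
  refine Eq.trans e2 ?_
  rw [tilde_deriv _ _ _ h1 hz1, mul_assoc (deriv (sigmatildeSq σ1 σW) z1 / 2),
    tilde_deriv _ _ _ h2 hz2]
  unfold sAlloc
  ring
end

section
/- Fix sigma_1 > 0, sigma_2 > 0 and sigma_W > 0, and define sigmatilde_i^2(z) = sigma_i^2 * z / (sigma_W^2 / sigma_i^2 + z) for z >= 0 and i = 1, 2. Then the function s(z_1, z_2) = sqrt(sigmatilde_1^2(z_1) + sigmatilde_2^2(z_2)) is concave on [0, infinity)^2. -/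
theorem sigmatildeSq_concave_aux (σ σW x y a b : ℝ) (h : 0 < σ) (hW : 0 < σW) (hx : 0 ≤ x)
    (hy : 0 ≤ y) (ha : 0 ≤ a) (hb : 0 ≤ b) (hab : a + b = 1) :
    a * sigmatildeSq σ σW x + b * sigmatildeSq σ σW y ≤ sigmatildeSq σ σW (a * x + b * y) := by
  unfold sigmatildeSq
  have hc : 0 < σW ^ 2 / σ ^ 2 := by positivity
  generalize σW ^ 2 / σ ^ 2 = c at hc
  have hz : 0 ≤ a * x + b * y := by positivity
  have key : σ ^ 2 * (a * x + b * y) / (c + (a * x + b * y))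
      - (a * (σ ^ 2 * x / (c + x)) + b * (σ ^ 2 * y / (c + y)))
      = σ ^ 2 * (c * a * b * (x - y) ^ 2) / ((c + (a * x + b * y)) * (c + x) * (c + y)) := by
    have e1 : c + x ≠ 0 := by positivity
    have e2 : c + y ≠ 0 := by positivity
    have e3 : c + (a * x + b * y) ≠ 0 := by positivity
    obtain rfl : b = 1 - a := by linarith
    field_simp
    ring
  have : 0 ≤ σ ^ 2 * (c * a * b * (x - y) ^ 2) /
      ((c + (a * x + b * y)) * (c + x) * (c + y)) := by positivity
  linarith

theorem sigmatildeSq_nonneg_aux (σ σW x : ℝ) (hx : 0 ≤ x) : 0 ≤ sigmatildeSq σ σW x := by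
  unfold sigmatildeSq
  positivity

/-- The standard deviation `s(z₁,z₂) = √(σ̃₁²(z₁) + σ̃₂²(z₂))` appearing in the
two-alternative value of information is concave on `[0,∞)²`. -/
theorem sAlloc_concaveOn (σ1 σ2 σW : ℝ) (h1 : 0 < σ1) (h2 : 0 < σ2) (hW : 0 < σW) :
    ConcaveOn ℝ (Set.Ici (0 : ℝ) ×ˢ Set.Ici (0 : ℝ))
      (fun z : ℝ × ℝ =>
        Real.sqrt (sigmatildeSq σ1 σW z.1 + sigmatildeSq σ2 σW z.2)) := by
  refine ⟨(convex_Ici 0).prod (convex_Ici 0), ?_⟩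
  rintro ⟨x1, x2⟩ ⟨hx1, hx2⟩ ⟨y1, y2⟩ ⟨hy1, hy2⟩ a b ha hb hab
  simp only [Set.mem_Ici] at hx1 hx2 hy1 hy2
  have k1 := sigmatildeSq_concave_aux σ1 σW x1 y1 a b h1 hW hx1 hy1 ha hb hab
  have k2 := sigmatildeSq_concave_aux σ2 σW x2 y2 a b h2 hW hx2 hy2 ha hb hab
  have hs := Real.strictConcaveOn_sqrt.concaveOn.2
    (Set.mem_Ici.2 (add_nonneg (sigmatildeSq_nonneg_aux σ1 σW x1 hx1)
      (sigmatildeSq_nonneg_aux σ2 σW x2 hx2)))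
    (Set.mem_Ici.2 (add_nonneg (sigmatildeSq_nonneg_aux σ1 σW y1 hy1)
      (sigmatildeSq_nonneg_aux σ2 σW y2 hy2))) ha hb hab
  refine hs.trans (Real.sqrt_le_sqrt ?_)
  simp only [smul_eq_mul, Prod.smul_mk, Prod.mk_add_mk]
  linarith
end
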